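/- arXiv:2401.15728 — 3 statements merged into one kernel-verified Lean document; each statement's English description precedes it below -/
import Mathlib

section
/- Let t ≤ T₁ ≤ u be real numbers with Σ_rr(t,T₁) > 0, let γ₁ > 0, and let c, y ∈ ℝ. Then ∫_ℝ exp( (1/2)γ₁² Σ_rr(T₁,u) ) · sinh( γ₁·( φ_r(T₁,u)·η + c ) ) · N(η; φ_r(t,T₁)·y, Σ_rr(t,T₁)) dη = exp( (1/2)γ₁² Σ_rr(t,u) ) · sinh( γ₁·( φ_r(t,u)·y + c ) ). In particular, Gaussian averaging of the smile-adjusted sinh short-rate factor over the interval [t,T₁] converts the dispersion factor ψ based on Σ_rr(T₁,u) into the one based on Σ_rr(t,u). -/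
open MeasureTheory Real

/-- Mean reversion factor `φ_r(t,v) = exp(−∫_t^v α)`. -/
noncomputable def phiR (α : ℝ → ℝ) (t v : ℝ) : ℝ := Real.exp (-(∫ u in t..v, α u))

/-- Variance of the short-rate factor `Σ_rr(t,v)`. -/
noncomputable def Srr (α σ : ℝ → ℝ) (t v : ℝ) : ℝ := ∫ u in t..v, (phiR α u v) ^ 2 * (σ u) ^ 2

/-- Smile dispersion factor `ψ_r(t,v)`. -/
noncomputable def psiR (α σ γ : ℝ → ℝ) (t v : ℝ) : ℝ :=
  Real.exp ((1 / 2) * (γ v) ^ 2 * Srr α σ t v)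

/-- Rate–integral covariance `Σ_rz(t,v)`. -/
noncomputable def Srz (α σ γ : ℝ → ℝ) (t v : ℝ) : ℝ :=
  ∫ u in t..v, psiR α σ γ t u * phiR α u v * Srr α σ t u

/-- Variance of the compounding variable `Σ_zz(t,v)`. -/
noncomputable def Szz (α σ γ : ℝ → ℝ) (t v : ℝ) : ℝ :=
  2 * ∫ u in t..v, psiR α σ γ t u * Srz α σ γ t u

/-- `B*(t,v) = ∫_t^v ψ_r(t,u) φ_r(t,u) du`. -/
noncomputable def Bstar (α σ γ : ℝ → ℝ) (t v : ℝ) : ℝ :=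
  ∫ u in t..v, psiR α σ γ t u * phiR α t u

/-- Drift of the compounding variable `μ*(y,t,v)`. -/
noncomputable def muStar (α σ γ : ℝ → ℝ) (y t v : ℝ) : ℝ :=
  Bstar α σ γ t v * (y + Srz α σ γ 0 t) + (1 / 2) * (Bstar α σ γ t v) ^ 2 * Srr α σ 0 t

/-- One-dimensional Gaussian density with mean `m` and variance `s`. -/
noncomputable def gauss (x m s : ℝ) : ℝ :=
  (Real.sqrt (2 * Real.pi * s))⁻¹ * Real.exp (-(x - m) ^ 2 / (2 * s))

/-- Centered bivariate Gaussian density with covariance `!![srr, srz; srz, szz]` at `(a, b)`. -/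
noncomputable def gauss2 (a b srr srz szz : ℝ) : ℝ :=
  (2 * Real.pi * Real.sqrt (srr * szz - srz ^ 2))⁻¹ *
    Real.exp (-(szz * a ^ 2 - 2 * srz * a * b + srr * b ^ 2) / (2 * (srr * szz - srz ^ 2)))

/-- The leading-order (Hull–White) Green's function `G₀`. -/
noncomputable def G0 (α σ γ : ℝ → ℝ) (y z t η ζ v : ℝ) : ℝ :=
  gauss2 (η - phiR α t v * y) (ζ - z - muStar α σ γ y t v)
    (Srr α σ t v) (Srz α σ γ t v) (Szz α σ γ t v)

open ProbabilityTheory in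
/-- A Gaussian average of `sinh` of an affine function. -/
lemma integral_sinh_mul_gauss (a b m : ℝ) {s : ℝ} (hs : 0 < s) :
    ∫ x : ℝ, Real.sinh (a * x + b) * gauss x m s =
      Real.exp (a ^ 2 * s / 2) * Real.sinh (a * m + b) := by
  lift s to NNReal using hs.le
  have hs0 : s ≠ 0 := by rintro rfl; simp at hs
  have hexp (k : ℝ) :
      ∫ x, Real.exp (k * x) ∂(gaussianReal m s) = Real.exp (m * k + s * k ^ 2 / 2) :=
    mgf_gaussianReal (X := id) (by simp) k
  have hint (k : ℝ) : Integrable (fun x ↦ Real.exp (k * x)) (gaussianReal m s) :=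
    integrable_exp_mul_gaussianReal k
  calc
    _ = ∫ x, Real.sinh (a * x + b) ∂(gaussianReal m s) := by
      rw [integral_gaussianReal_eq_integral_smul hs0]
      refine integral_congr_ae (.of_forall fun x ↦ ?_)
      simp only [gauss, gaussianPDFReal, smul_eq_mul]
      ring
    _ = ∫ x, (Real.exp b / 2 * Real.exp (a * x) - Real.exp (-b) / 2 * Real.exp (-a * x))
          ∂(gaussianReal m s) := by
      refine integral_congr_ae (.of_forall fun x ↦ ?_)
      simp only [Real.sinh_eq, neg_add, Real.exp_add, neg_mul]
      ring
    _ = _ := by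
      rw [integral_sub ((hint a).const_mul _) ((hint (-a)).const_mul _),
        integral_const_mul, integral_const_mul, hexp, hexp, Real.sinh_eq]
      simp only [neg_add, Real.exp_add, neg_sq, mul_neg, mul_comm m a, mul_comm (s : ℝ)]
      ring

/-- Cocycle property of the mean reversion factor. -/
lemma phiR_mul_phiR {α : ℝ → ℝ} (hα : Continuous α) (a b c : ℝ) :
    phiR α a b * phiR α b c = phiR α a c := by
  rw [phiR, phiR, phiR, ← Real.exp_add, ← neg_add,
    intervalIntegral.integral_add_adjacent_intervals (hα.intervalIntegrable _ _)
      (hα.intervalIntegrable _ _)]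

lemma continuous_phiR_left {α : ℝ → ℝ} (hα : Continuous α) (v : ℝ) :
    Continuous fun u ↦ phiR α u v := by
  simp only [phiR, intervalIntegral.integral_symm v]
  exact Real.continuous_exp.comp
    (intervalIntegral.continuous_primitive (fun _ _ ↦ hα.intervalIntegrable _ _) v).neg.neg

/-- Propagation of the short-rate variance through an intermediate time. -/
lemma Srr_eq_add {α σ : ℝ → ℝ} (hα : Continuous α) (hσ : Continuous σ) (a b c : ℝ) :
    Srr α σ a c = phiR α b c ^ 2 * Srr α σ a b + Srr α σ b c := by
  have hcont : Continuous fun u ↦ phiR α u c ^ 2 * σ u ^ 2 :=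
    ((continuous_phiR_left hα c).pow 2).mul (hσ.pow 2)
  rw [Srr, Srr, Srr, ← intervalIntegral.integral_add_adjacent_intervals
    (hcont.intervalIntegrable a b) (hcont.intervalIntegrable b c),
    ← intervalIntegral.integral_const_mul]
  congr 2
  funext u
  rw [← phiR_mul_phiR hα u b c]
  ring

theorem gaussian_average_sinh (α σ : ℝ → ℝ)
    (hα : Continuous α) (hσc : Continuous σ)
    (t T₁ u : ℝ) (ht : t ≤ T₁) (hu : T₁ ≤ u)
    (hrr : 0 < Srr α σ t T₁) (γ₁ : ℝ) (hγ : 0 < γ₁) (c y : ℝ) :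
    (∫ η : ℝ,
        Real.exp ((1 / 2) * γ₁ ^ 2 * Srr α σ T₁ u) *
          Real.sinh (γ₁ * (phiR α T₁ u * η + c)) *
          gauss η (phiR α t T₁ * y) (Srr α σ t T₁))
      = Real.exp ((1 / 2) * γ₁ ^ 2 * Srr α σ t u) *
          Real.sinh (γ₁ * (phiR α t u * y + c)) := by
  simp only [mul_assoc (Real.exp _), mul_add γ₁, ← mul_assoc γ₁]
  rw [integral_const_mul, integral_sinh_mul_gauss _ _ _ hrr, ← mul_assoc, ← Real.exp_add,
    Srr_eq_add hα hσc t T₁ u, ← phiR_mul_phiR hα t T₁ u]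
  congr 2 <;> ring
end

section
/- Fix T₁ < T₂ with the covariance matrix Σ(T₁,T₂) positive definite, assume γ(u) > 0 for u ∈ [T₁,T₂], and let D > 0, y, z ∈ ℝ. Then the first-order correction to the 3M SOFR futures value at time T₁ is given by: ∫∫_{ℝ²} ( e^{ζ−z}/D − 1 ) · G₁(y,z,T₁; η,ζ,T₂) dη dζ = { ∫_{T₁}^{T₂} [ R⁺(y,T₁,t₁)·exp( B*(T₁,T₂)·Δy(T₁,t₁) + Δz(T₁,t₁) ) − R⁻(y,T₁,t₁)·exp( −B*(T₁,T₂)·Δy(T₁,t₁) − Δz(T₁,t₁) ) + R₁*(t₁) ] dt₁ − μ*(y,T₁,T₂) − Σ_zz(T₁,T₂) } · exp( μ*(y,T₁,T₂) + (1/2)Σ_zz(T₁,T₂) ) / D. -/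
open MeasureTheory Real

/-- The smile factor `R⁺(y,t,u)`. -/
noncomputable def Rplus (α σ γ ystar : ℝ → ℝ) (y t u : ℝ) : ℝ :=
  Real.exp ((1 / 2) * (γ u) ^ 2 * Srr α σ t u + γ u * (phiR α t u * y + ystar u)) / (2 * γ u)

/-- The smile factor `R⁻(y,t,u)`. -/
noncomputable def Rminus (α σ γ ystar : ℝ → ℝ) (y t u : ℝ) : ℝ :=
  Real.exp ((1 / 2) * (γ u) ^ 2 * Srr α σ t u - γ u * (phiR α t u * y + ystar u)) / (2 * γ u)

/-- The argument shift `Δy(t,u)`. -/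
noncomputable def dY (α σ γ : ℝ → ℝ) (t u : ℝ) : ℝ := γ u * Srr α σ t u / phiR α t u

/-- The argument shift `Δz(t,u)`. -/
noncomputable def dZ (α σ γ : ℝ → ℝ) (t u : ℝ) : ℝ :=
  γ u * Srz α σ γ t u - Bstar α σ γ t u * dY α σ γ t u

/-- `∂_z G₀` in the backward variable `z`. -/
noncomputable def dzG0 (α σ γ : ℝ → ℝ) (y z t η ζ v : ℝ) : ℝ :=
  deriv (fun z' => G0 α σ γ y z' t η ζ v) z

/-- `∂_y ∂_z G₀` in the backward variables. -/
noncomputable def dydzG0 (α σ γ : ℝ → ℝ) (y z t η ζ v : ℝ) : ℝ :=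
  deriv (fun y' => dzG0 α σ γ y' z t η ζ v) y

/-- `∂_z² G₀` in the backward variable `z`. -/
noncomputable def dzzG0 (α σ γ : ℝ → ℝ) (y z t η ζ v : ℝ) : ℝ :=
  deriv (fun z' => dzG0 α σ γ y z' t η ζ v) z

/-- The first-order Green's function correction `G₁`. -/
noncomputable def G1 (α σ γ ystar R1star : ℝ → ℝ) (y z t η ζ v : ℝ) : ℝ :=
  (∫ t₁ in t..v,
      (Rplus α σ γ ystar y t t₁ *
          dzG0 α σ γ (y + dY α σ γ t t₁) (z + dZ α σ γ t t₁) t η ζ v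
        - Rminus α σ γ ystar y t t₁ *
            dzG0 α σ γ (y - dY α σ γ t t₁) (z - dZ α σ γ t t₁) t η ζ v
        + R1star t₁ * dzG0 α σ γ y z t η ζ v))
    - muStar α σ γ y t v * dzG0 α σ γ y z t η ζ v
    - (Srz α σ γ t v / phiR α t v) *
        (dydzG0 α σ γ y z t η ζ v - Bstar α σ γ t v * dzzG0 α σ γ y z t η ζ v)
    - Szz α σ γ t v * dzzG0 α σ γ y z t η ζ v

/-- Minus the first derivative of the centered Gaussian density. -/
noncomputable def gaussD1 (x s : ℝ) : ℝ := x / s * gauss x 0 s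

/-- The second derivative of the centered Gaussian density. -/
noncomputable def gaussD2 (x s : ℝ) : ℝ := (x ^ 2 / s ^ 2 - 1 / s) * gauss x 0 s

lemma hasDerivAt_gauss {s : ℝ} (hs : 0 < s) (x : ℝ) :
    HasDerivAt (fun x => gauss x 0 s) (-gaussD1 x s) x := by
  unfold gaussD1 gauss
  have h : HasDerivAt (fun x : ℝ => -(x - 0) ^ 2 / (2 * s)) (-(x / s)) x := by
    have := ((((hasDerivAt_id x).sub_const 0).pow 2).neg).div_const (2 * s)
    refine this.congr_deriv ?_
    simp
    field_simp
  refine (h.exp.const_mul _).congr_deriv ?_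
  ring

lemma hasDerivAt_gaussD1 {s : ℝ} (hs : 0 < s) (x : ℝ) :
    HasDerivAt (fun x => gaussD1 x s) (-gaussD2 x s) x := by
  have h := ((hasDerivAt_id x).div_const s).mul (hasDerivAt_gauss hs x)
  refine h.congr_deriv ?_
  simp only [gaussD1, gaussD2, id]
  field_simp
  ring

lemma integrable_pow_mul_exp_neg_mul_sq {b : ℝ} (hb : 0 < b) (n : ℕ) :
    Integrable fun x : ℝ => x ^ n * Real.exp (-b * x ^ 2) := by
  have h := integrable_rpow_mul_exp_neg_mul_sq hb (s := n)
    (lt_of_lt_of_le (by norm_num) (Nat.cast_nonneg n))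
  simpa only [Real.rpow_natCast] using h

lemma exp_mul_gauss_eq {s : ℝ} (hs : 0 < s) (k x : ℝ) :
    Real.exp (k * x) * gauss x 0 s = Real.exp (k ^ 2 * s / 2) * gauss (x - k * s) 0 s := by
  unfold gauss
  rw [mul_left_comm, ← Real.exp_add, mul_left_comm, ← Real.exp_add]
  congr 2
  field_simp
  ring

lemma integrable_pow_mul_gauss {s : ℝ} (hs : 0 < s) (n : ℕ) :
    Integrable fun x : ℝ => x ^ n * gauss x 0 s := by
  have h := (integrable_pow_mul_exp_neg_mul_sq (b := 1 / (2 * s)) (by positivity) n).const_mul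
    (Real.sqrt (2 * Real.pi * s))⁻¹
  refine h.congr (Filter.Eventually.of_forall fun x => ?_)
  simp only [gauss]
  rw [mul_left_comm]
  congr 3
  ring

lemma integral_gauss {s : ℝ} (hs : 0 < s) : ∫ x : ℝ, gauss x 0 s = 1 := by
  have h : ∀ x : ℝ, gauss x 0 s =
      (Real.sqrt (2 * Real.pi * s))⁻¹ * Real.exp (-(1 / (2 * s)) * x ^ 2) := by
    intro x
    simp only [gauss]
    congr 2
    ring
  simp_rw [h]
  rw [integral_const_mul, integral_gaussian]
  have : Real.pi / (1 / (2 * s)) = 2 * Real.pi * s := by field_simp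
  rw [this]
  have : 0 < Real.sqrt (2 * Real.pi * s) := Real.sqrt_pos.2 (by positivity)
  field_simp

lemma integrable_exp_mul_gauss {s : ℝ} (hs : 0 < s) (k : ℝ) :
    Integrable fun x : ℝ => Real.exp (k * x) * gauss x 0 s := by
  simp_rw [exp_mul_gauss_eq hs]
  have h := integrable_pow_mul_gauss hs 0
  simp only [pow_zero, one_mul] at h
  exact (h.comp_sub_right (k * s)).const_mul _

lemma integrable_exp_mul_id_mul_gauss {s : ℝ} (hs : 0 < s) (k : ℝ) :
    Integrable fun x : ℝ => Real.exp (k * x) * (x * gauss x 0 s) := by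
  have h0 := integrable_exp_mul_gauss hs k
  have h1 := ((integrable_pow_mul_gauss hs 1).comp_sub_right (k * s)).const_mul
    (Real.exp (k ^ 2 * s / 2))
  refine (h1.add (h0.const_mul (k * s))).congr (Filter.Eventually.of_forall fun x => ?_)
  have := exp_mul_gauss_eq hs k x
  simp only [Pi.add_apply]
  linear_combination (k * s - x) * this

lemma integrable_exp_mul_sq_mul_gauss {s : ℝ} (hs : 0 < s) (k : ℝ) :
    Integrable fun x : ℝ => Real.exp (k * x) * (x ^ 2 * gauss x 0 s) := by
  have h0 := integrable_exp_mul_gauss hs k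
  have h1 := integrable_exp_mul_id_mul_gauss hs k
  have h2 := ((integrable_pow_mul_gauss hs 2).comp_sub_right (k * s)).const_mul
    (Real.exp (k ^ 2 * s / 2))
  refine ((h2.add (h1.const_mul (2 * (k * s)))).sub (h0.const_mul ((k * s) ^ 2))).congr
    (Filter.Eventually.of_forall fun x => ?_)
  have := exp_mul_gauss_eq hs k x
  simp only [Pi.add_apply, Pi.sub_apply]
  linear_combination (-(x - k * s) ^ 2) * this

lemma integrable_exp_mul_gaussD1 {s : ℝ} (hs : 0 < s) (k : ℝ) :
    Integrable fun x : ℝ => Real.exp (k * x) * gaussD1 x s := by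
  refine ((integrable_exp_mul_id_mul_gauss hs k).const_mul (1 / s)).congr
    (Filter.Eventually.of_forall fun x => ?_)
  simp only [gaussD1]
  ring

lemma integrable_exp_mul_gaussD2 {s : ℝ} (hs : 0 < s) (k : ℝ) :
    Integrable fun x : ℝ => Real.exp (k * x) * gaussD2 x s := by
  refine (((integrable_exp_mul_sq_mul_gauss hs k).const_mul (1 / s ^ 2)).sub
    ((integrable_exp_mul_gauss hs k).const_mul (1 / s))).congr
    (Filter.Eventually.of_forall fun x => ?_)
  simp only [gaussD2, Pi.sub_apply]
  ring

lemma integral_exp_mul_gauss {s : ℝ} (hs : 0 < s) (k : ℝ) :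
    ∫ x : ℝ, Real.exp (k * x) * gauss x 0 s = Real.exp (k ^ 2 * s / 2) := by
  simp_rw [exp_mul_gauss_eq hs]
  rw [integral_const_mul, integral_sub_right_eq_self (fun x => gauss x 0 s), integral_gauss hs,
    mul_one]

/-- Integration by parts against an exponential. -/
lemma integral_exp_mul_of_hasDerivAt_neg {f g : ℝ → ℝ} (k : ℝ)
    (hfg : ∀ x, HasDerivAt f (-g x) x)
    (hf : Integrable fun x => Real.exp (k * x) * f x)
    (hg : Integrable fun x => Real.exp (k * x) * g x) :
    ∫ x, Real.exp (k * x) * g x = k * ∫ x, Real.exp (k * x) * f x := by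
  have hd : ∀ x, HasDerivAt (fun x => Real.exp (k * x) * f x)
      (k * (Real.exp (k * x) * f x) - Real.exp (k * x) * g x) x := by
    intro x
    have h1 : HasDerivAt (fun x : ℝ => Real.exp (k * x)) (Real.exp (k * x) * k) x := by
      simpa using ((hasDerivAt_id x).const_mul k).exp
    refine (h1.mul (hfg x)).congr_deriv ?_
    ring
  have h0 := integral_eq_zero_of_hasDerivAt_of_integrable hd ((hf.const_mul k).sub hg) hf
  rw [integral_sub (hf.const_mul k) hg, integral_const_mul] at h0
  linarith

lemma integral_exp_mul_gaussD1 {s : ℝ} (hs : 0 < s) (k : ℝ) :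
    ∫ x : ℝ, Real.exp (k * x) * gaussD1 x s = k * Real.exp (k ^ 2 * s / 2) := by
  rw [integral_exp_mul_of_hasDerivAt_neg k (hasDerivAt_gauss hs) (integrable_exp_mul_gauss hs k)
    (integrable_exp_mul_gaussD1 hs k), integral_exp_mul_gauss hs]

lemma integral_exp_mul_gaussD2 {s : ℝ} (hs : 0 < s) (k : ℝ) :
    ∫ x : ℝ, Real.exp (k * x) * gaussD2 x s = k ^ 2 * Real.exp (k ^ 2 * s / 2) := by
  rw [integral_exp_mul_of_hasDerivAt_neg k (hasDerivAt_gaussD1 hs)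
    (integrable_exp_mul_gaussD1 hs k)
    (integrable_exp_mul_gaussD2 hs k), integral_exp_mul_gaussD1 hs]
  ring

lemma gauss2_eq {a b srr srz szz : ℝ} (hr : 0 < srr) (hd : 0 < srr * szz - srz ^ 2) :
    gauss2 a b srr srz szz =
      gauss a 0 srr * gauss (b - srz / srr * a) 0 ((srr * szz - srz ^ 2) / srr) := by
  unfold gauss2 gauss
  rw [mul_mul_mul_comm, ← Real.exp_add, ← mul_inv, ← Real.sqrt_mul (by positivity)]
  congr 2
  · have : 2 * Real.pi * srr * (2 * Real.pi * ((srr * szz - srz ^ 2) / srr)) =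
        (2 * Real.pi) ^ 2 * (srr * szz - srz ^ 2) := by field_simp
    rw [this, Real.sqrt_mul (by positivity), Real.sqrt_sq (by positivity)]
  · have hd' := hd.ne'
    have hr' := hr.ne'
    generalize hdd : srr * szz - srz ^ 2 = d at *
    have hz : szz = (d + srz ^ 2) / srr := by rw [← hdd]; field_simp; ring
    rw [hz]
    field_simp
    ring

lemma measurePreserving_shear (ρ p q : ℝ) :
    MeasurePreserving (fun x : ℝ × ℝ => (x.1 - p, x.2 - q - ρ * (x.1 - p)))
      (volume.prod volume) (volume.prod volume) := by
  refine MeasurePreserving.skew_product (g := fun a x => x - q - ρ * (a - p))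
    (measurePreserving_sub_right volume p) ?_ ?_
  · simp only [Function.uncurry_def]
    fun_prop
  · refine Filter.Eventually.of_forall fun a => ?_
    have := (measurePreserving_sub_right (volume : Measure ℝ) (q + ρ * (a - p))).map_eq
    simpa only [sub_sub] using this

lemma measurePreserving_family_shear {μ : Measure ℝ} [SFinite μ] (ρ : ℝ) {p q : ℝ → ℝ}
    (hp : Measurable p) (hq : Measurable q) :
    MeasurePreserving
      (fun x : ℝ × (ℝ × ℝ) => (x.1, (x.2.1 - p x.1, x.2.2 - q x.1 - ρ * (x.2.1 - p x.1))))
      (μ.prod (volume.prod volume)) (μ.prod (volume.prod volume)) := by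
  refine MeasurePreserving.skew_product
    (g := fun t (x : ℝ × ℝ) => (x.1 - p t, x.2 - q t - ρ * (x.1 - p t)))
    (MeasurePreserving.id μ) ?_ ?_
  · simp only [Function.uncurry_def]
    fun_prop
  · exact Filter.Eventually.of_forall fun t => (measurePreserving_shear ρ (p t) (q t)).map_eq

/-- The payoff `exp (ζ - z) / D - 1` times a translated and sheared product kernel. -/
noncomputable def payoffKernel (D z ρ : ℝ) (f h : ℝ → ℝ) (p q : ℝ) (x : ℝ × ℝ) : ℝ :=
  (Real.exp (x.2 - z) / D - 1) * (f (x.1 - p) * h (x.2 - q - ρ * (x.1 - p)))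

section PayoffKernel

variable {D z ρ : ℝ} {f h : ℝ → ℝ}

lemma payoffKernel_eq (p q : ℝ) (x : ℝ × ℝ) :
    payoffKernel D z ρ f h p q x =
      Real.exp (q - z) / D * ((Real.exp (ρ * (x.1 - p)) * f (x.1 - p)) *
        (Real.exp (1 * (x.2 - q - ρ * (x.1 - p))) * h (x.2 - q - ρ * (x.1 - p)))) -
      (Real.exp (0 * (x.1 - p)) * f (x.1 - p)) *
        (Real.exp (0 * (x.2 - q - ρ * (x.1 - p))) * h (x.2 - q - ρ * (x.1 - p))) := by
  have : Real.exp (x.2 - z) = Real.exp (q - z) * Real.exp (ρ * (x.1 - p)) *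
      Real.exp (1 * (x.2 - q - ρ * (x.1 - p))) := by
    rw [← Real.exp_add, ← Real.exp_add]
    congr 1
    ring
  simp only [payoffKernel, zero_mul, Real.exp_zero]
  rw [this]
  ring

lemma integrable_family_payoffKernel {μ : Measure ℝ} [SFinite μ]
    (hf : ∀ k, Integrable fun x => Real.exp (k * x) * f x)
    (hh : ∀ k, Integrable fun x => Real.exp (k * x) * h x)
    {w p q : ℝ → ℝ} (hp : Measurable p) (hq : Measurable q) (hw : Integrable w μ)
    (hwq : Integrable (fun t => w t * Real.exp (q t)) μ) :
    Integrable (fun x : ℝ × (ℝ × ℝ) => w x.1 * payoffKernel D z ρ f h (p x.1) (q x.1) x.2)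
      (μ.prod (volume.prod volume)) := by
  have h1 := (hwq.const_mul (Real.exp (-z) / D)).mul_prod ((hf ρ).mul_prod (hh 1))
  have h2 := hw.mul_prod ((hf 0).mul_prod (hh 0))
  refine ((measurePreserving_family_shear ρ hp hq).integrable_comp_of_integrable
    (h1.sub h2)).congr (Filter.Eventually.of_forall fun x => ?_)
  simp only [Function.comp_apply, Pi.sub_apply]
  rw [payoffKernel_eq, sub_eq_add_neg (q x.1) z, Real.exp_add]
  ring

lemma integrable_payoffKernel
    (hf : ∀ k, Integrable fun x => Real.exp (k * x) * f x)
    (hh : ∀ k, Integrable fun x => Real.exp (k * x) * h x) (p q : ℝ) :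
    Integrable (payoffKernel D z ρ f h p q) (volume.prod volume) := by
  have h1 := ((hf ρ).mul_prod (hh 1)).const_mul (Real.exp (q - z) / D)
  have h2 := (hf 0).mul_prod (hh 0)
  refine ((measurePreserving_shear ρ p q).integrable_comp_of_integrable
    (h1.sub h2)).congr (Filter.Eventually.of_forall fun x => ?_)
  simp only [Function.comp_apply, Pi.sub_apply]
  rw [payoffKernel_eq]

lemma integral_shear_mul {F H : ℝ → ℝ} (hF : Integrable F) (hH : Integrable H) (ρ p q : ℝ) :
    Integrable (fun x : ℝ × ℝ => F (x.1 - p) * H (x.2 - q - ρ * (x.1 - p)))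
      (volume.prod volume) ∧
    ∫ x : ℝ × ℝ, F (x.1 - p) * H (x.2 - q - ρ * (x.1 - p)) ∂(volume.prod volume) =
      (∫ a, F a) * ∫ c, H c := by
  have hI : Integrable (fun x : ℝ × ℝ => F (x.1 - p) * H (x.2 - q - ρ * (x.1 - p)))
      (volume.prod volume) :=
    (measurePreserving_shear ρ p q).integrable_comp_of_integrable (hF.mul_prod hH)
  refine ⟨hI, ?_⟩
  rw [integral_prod _ hI]
  simp only [sub_sub, integral_const_mul, integral_sub_right_eq_self H]
  rw [integral_mul_const, integral_sub_right_eq_self F]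

lemma integral_payoffKernel
    (hf : ∀ k, Integrable fun x => Real.exp (k * x) * f x)
    (hh : ∀ k, Integrable fun x => Real.exp (k * x) * h x) (p q : ℝ) :
    ∫ x, payoffKernel D z ρ f h p q x ∂(volume.prod volume) =
      Real.exp (q - z) / D *
        ((∫ a, Real.exp (ρ * a) * f a) * ∫ c, Real.exp (1 * c) * h c) -
      (∫ a, Real.exp (0 * a) * f a) * ∫ c, Real.exp (0 * c) * h c := by
  simp_rw [payoffKernel_eq]
  obtain ⟨i1, e1⟩ := integral_shear_mul (hf ρ) (hh 1) ρ p q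
  obtain ⟨i2, e2⟩ := integral_shear_mul (hf 0) (hh 0) ρ p q
  rw [integral_sub (i1.const_mul _) i2, integral_const_mul, e1, e2]

end PayoffKernel

section Continuity

variable {α σ γ : ℝ → ℝ}

lemma continuous_phiR (hα : Continuous α) : Continuous fun x : ℝ × ℝ => phiR α x.1 x.2 := by
  have h : ∀ x : ℝ × ℝ, ∫ u in x.1..x.2, α u = (∫ u in 0..x.2, α u) - ∫ u in 0..x.1, α u :=
    fun x => (intervalIntegral.integral_interval_sub_left (hα.intervalIntegrable _ _)
      (hα.intervalIntegrable _ _)).symm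
  have hc : Continuous fun v => ∫ u in (0 : ℝ)..v, α u :=
    intervalIntegral.continuous_primitive (fun a b => hα.intervalIntegrable a b) 0
  simp only [phiR, h]
  fun_prop

lemma continuous_Srr (hα : Continuous α) (hσ : Continuous σ) (t : ℝ) :
    Continuous fun v => Srr α σ t v := by
  have h := (continuous_phiR hα).comp continuous_swap
  refine intervalIntegral.continuous_parametric_intervalIntegral_of_continuous
    (f := fun v u => phiR α u v ^ 2 * σ u ^ 2) ?_ continuous_id
  exact (h.pow 2).mul ((hσ.comp continuous_snd).pow 2)

lemma continuous_psiR (hα : Continuous α) (hσ : Continuous σ) (hγ : Continuous γ) (t : ℝ) :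
    Continuous fun v => psiR α σ γ t v := by
  have h := continuous_Srr hα hσ t
  unfold psiR
  fun_prop

lemma continuous_Srz (hα : Continuous α) (hσ : Continuous σ) (hγ : Continuous γ) (t : ℝ) :
    Continuous fun v => Srz α σ γ t v := by
  have h := (continuous_phiR hα).comp continuous_swap
  refine intervalIntegral.continuous_parametric_intervalIntegral_of_continuous
    (f := fun v u => psiR α σ γ t u * phiR α u v * Srr α σ t u) ?_ continuous_id
  exact (((continuous_psiR hα hσ hγ t).comp continuous_snd).mul h).mul
    ((continuous_Srr hα hσ t).comp continuous_snd)

lemma continuous_phiR_right (hα : Continuous α) (t : ℝ) : Continuous fun v => phiR α t v :=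
  (continuous_phiR hα).comp (Continuous.prodMk_right t)

lemma continuous_Bstar (hα : Continuous α) (hσ : Continuous σ) (hγ : Continuous γ) (t : ℝ) :
    Continuous fun v => Bstar α σ γ t v :=
  intervalIntegral.continuous_primitive (fun _ _ =>
    ((continuous_psiR hα hσ hγ t).mul (continuous_phiR_right hα t)).intervalIntegrable _ _) t

lemma continuous_dY (hα : Continuous α) (hσ : Continuous σ) (hγ : Continuous γ) (t : ℝ) :
    Continuous fun v => dY α σ γ t v :=
  (hγ.mul (continuous_Srr hα hσ t)).div (continuous_phiR_right hα t)
    fun _ => (Real.exp_pos _).ne'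

lemma continuous_dZ (hα : Continuous α) (hσ : Continuous σ) (hγ : Continuous γ) (t : ℝ) :
    Continuous fun v => dZ α σ γ t v :=
  (hγ.mul (continuous_Srz hα hσ hγ t)).sub
    ((continuous_Bstar hα hσ hγ t).mul (continuous_dY hα hσ hγ t))

lemma continuousOn_Rplus {ystar : ℝ → ℝ} (hα : Continuous α) (hσ : Continuous σ)
    (hγ : Continuous γ) (hys : Continuous ystar) (y t : ℝ) {s : Set ℝ}
    (hpos : ∀ u ∈ s, 0 < γ u) :
    ContinuousOn (fun u => Rplus α σ γ ystar y t u) s := by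
  have h1 := continuous_Srr hα hσ t
  have h2 := continuous_phiR_right hα t
  unfold Rplus
  refine ContinuousOn.div (by fun_prop) (by fun_prop) fun u hu => ?_
  have := hpos u hu
  positivity

lemma continuousOn_Rminus {ystar : ℝ → ℝ} (hα : Continuous α) (hσ : Continuous σ)
    (hγ : Continuous γ) (hys : Continuous ystar) (y t : ℝ) {s : Set ℝ}
    (hpos : ∀ u ∈ s, 0 < γ u) :
    ContinuousOn (fun u => Rminus α σ γ ystar y t u) s := by
  have h1 := continuous_Srr hα hσ t
  have h2 := continuous_phiR_right hα t
  unfold Rminus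
  refine ContinuousOn.div (by fun_prop) (by fun_prop) fun u hu => ?_
  have := hpos u hu
  positivity

end Continuity

section Derivatives

variable {α σ γ : ℝ → ℝ} {t v : ℝ}

lemma muStar_add (y d : ℝ) :
    muStar α σ γ (y + d) t v = muStar α σ γ y t v + Bstar α σ γ t v * d := by
  unfold muStar
  ring

lemma hasDerivAt_muStar (y : ℝ) :
    HasDerivAt (fun y => muStar α σ γ y t v) (Bstar α σ γ t v) y := by
  unfold muStar
  simpa using (((hasDerivAt_id y).add_const (Srz α σ γ 0 t)).const_mul
    (Bstar α σ γ t v)).add_const ((1 / 2) * (Bstar α σ γ t v) ^ 2 * Srr α σ 0 t)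

lemma dzG0_eq {ρ s : ℝ} (hs : 0 < s)
    (hG : ∀ a b, gauss2 a b (Srr α σ t v) (Srz α σ γ t v) (Szz α σ γ t v) =
      gauss a 0 (Srr α σ t v) * gauss (b - ρ * a) 0 s) (y z η ζ : ℝ) :
    dzG0 α σ γ y z t η ζ v = gauss (η - phiR α t v * y) 0 (Srr α σ t v) *
      gaussD1 (ζ - (z + muStar α σ γ y t v) - ρ * (η - phiR α t v * y)) s := by
  unfold dzG0 G0
  simp_rw [hG, sub_sub ζ _ (muStar α σ γ y t v)]
  have h1 : HasDerivAt
      (fun z => ζ - (z + muStar α σ γ y t v) - ρ * (η - phiR α t v * y)) (-1) z :=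
    (((hasDerivAt_id z).add_const _).const_sub ζ).sub_const _
  have h2 := ((hasDerivAt_gauss hs _).comp z h1).const_mul
    (gauss (η - phiR α t v * y) 0 (Srr α σ t v))
  refine h2.deriv.trans ?_
  ring

lemma dzzG0_eq {ρ s : ℝ} (hs : 0 < s)
    (hG : ∀ a b, gauss2 a b (Srr α σ t v) (Srz α σ γ t v) (Szz α σ γ t v) =
      gauss a 0 (Srr α σ t v) * gauss (b - ρ * a) 0 s) (y z η ζ : ℝ) :
    dzzG0 α σ γ y z t η ζ v = gauss (η - phiR α t v * y) 0 (Srr α σ t v) *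
      gaussD2 (ζ - (z + muStar α σ γ y t v) - ρ * (η - phiR α t v * y)) s := by
  unfold dzzG0
  simp_rw [dzG0_eq hs hG]
  have h1 : HasDerivAt
      (fun z => ζ - (z + muStar α σ γ y t v) - ρ * (η - phiR α t v * y)) (-1) z :=
    (((hasDerivAt_id z).add_const _).const_sub ζ).sub_const _
  have h2 := ((hasDerivAt_gaussD1 hs _).comp z h1).const_mul
    (gauss (η - phiR α t v * y) 0 (Srr α σ t v))
  refine h2.deriv.trans ?_
  ring

lemma dydzG0_eq {ρ s : ℝ} (hs : 0 < s) (hr : 0 < Srr α σ t v)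
    (hG : ∀ a b, gauss2 a b (Srr α σ t v) (Srz α σ γ t v) (Szz α σ γ t v) =
      gauss a 0 (Srr α σ t v) * gauss (b - ρ * a) 0 s) (y z η ζ : ℝ) :
    dydzG0 α σ γ y z t η ζ v =
      phiR α t v * (gaussD1 (η - phiR α t v * y) (Srr α σ t v) *
        gaussD1 (ζ - (z + muStar α σ γ y t v) - ρ * (η - phiR α t v * y)) s) +
      (Bstar α σ γ t v - ρ * phiR α t v) * (gauss (η - phiR α t v * y) 0 (Srr α σ t v) *
        gaussD2 (ζ - (z + muStar α σ γ y t v) - ρ * (η - phiR α t v * y)) s) := by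
  unfold dydzG0
  simp_rw [dzG0_eq hs hG]
  have h0 : HasDerivAt (fun y => η - phiR α t v * y) (-(phiR α t v * 1)) y :=
    ((hasDerivAt_id y).const_mul _).const_sub η
  have h1 : HasDerivAt
      (fun y => ζ - (z + muStar α σ γ y t v) - ρ * (η - phiR α t v * y))
      (-Bstar α σ γ t v - ρ * -(phiR α t v * 1)) y :=
    (((hasDerivAt_muStar y).const_add z).const_sub ζ).sub (h0.const_mul ρ)
  have h2 := ((hasDerivAt_gauss hr _).comp y h0).mul ((hasDerivAt_gaussD1 hs _).comp y h1)
  refine h2.deriv.trans ?_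
  simp only [Function.comp_apply]
  ring

end Derivatives

theorem sofr_3M_first_order_at_T1 (α σ γ ystar R1star : ℝ → ℝ)
    (hα : Continuous α) (hσc : Continuous σ) (hγc : Continuous γ)
    (hys : Continuous ystar) (hR1 : Continuous R1star)
    (T₁ T₂ D y z : ℝ) (h12 : T₁ < T₂)
    (hPD : (!![Srr α σ T₁ T₂, Srz α σ γ T₁ T₂;
               Srz α σ γ T₁ T₂, Szz α σ γ T₁ T₂]).PosDef)
    (hγ : ∀ u ∈ Set.Icc T₁ T₂, 0 < γ u) (hD : 0 < D) :
    (∫ η : ℝ, ∫ ζ : ℝ,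
        (Real.exp (ζ - z) / D - 1) * G1 α σ γ ystar R1star y z T₁ η ζ T₂)
      = ((∫ t₁ in T₁..T₂,
            (Rplus α σ γ ystar y T₁ t₁ *
                Real.exp (Bstar α σ γ T₁ T₂ * dY α σ γ T₁ t₁ + dZ α σ γ T₁ t₁)
              - Rminus α σ γ ystar y T₁ t₁ *
                  Real.exp (-(Bstar α σ γ T₁ T₂ * dY α σ γ T₁ t₁) - dZ α σ γ T₁ t₁)
              + R1star t₁))
          - muStar α σ γ y T₁ T₂ - Szz α σ γ T₁ T₂) *
          Real.exp (muStar α σ γ y T₁ T₂ + (1 / 2) * Szz α σ γ T₁ T₂) / D := by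

  have hr : 0 < Srr α σ T₁ T₂ := by simpa using hPD.diag_pos (i := 0)
  have hd : 0 < Srr α σ T₁ T₂ * Szz α σ γ T₁ T₂ - Srz α σ γ T₁ T₂ ^ 2 := by
    have := hPD.det_pos
    rw [Matrix.det_fin_two_of] at this
    linarith [sq (Srz α σ γ T₁ T₂)]
  have hφ : 0 < phiR α T₁ T₂ := Real.exp_pos _
  have hG := fun a b => gauss2_eq (a := a) (b := b) hr hd
  set ρ := Srz α σ γ T₁ T₂ / Srr α σ T₁ T₂ with hρ
  set s := (Srr α σ T₁ T₂ * Szz α σ γ T₁ T₂ - Srz α σ γ T₁ T₂ ^ 2) / Srr α σ T₁ T₂ with hs_def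
  have hs : 0 < s := div_pos hd hr
  have hvar : ρ ^ 2 * Srr α σ T₁ T₂ / 2 + 1 ^ 2 * s / 2 = 1 / 2 * Szz α σ γ T₁ T₂ := by
    rw [hρ, hs_def]
    field_simp
    ring
  -- The three product kernels that make up the derivatives of the leading-order density.
  set g0 : ℝ → ℝ := fun x => gauss x 0 (Srr α σ T₁ T₂) with hg0
  set g1 : ℝ → ℝ := fun x => gaussD1 x (Srr α σ T₁ T₂) with hg1
  set h1 : ℝ → ℝ := fun x => gaussD1 x s with hh1
  set h2 : ℝ → ℝ := fun x => gaussD2 x s with hh2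
  have ig0 : ∀ k, Integrable fun x => Real.exp (k * x) * g0 x := integrable_exp_mul_gauss hr
  have ig1 : ∀ k, Integrable fun x => Real.exp (k * x) * g1 x := integrable_exp_mul_gaussD1 hr
  have ih1 : ∀ k, Integrable fun x => Real.exp (k * x) * h1 x := integrable_exp_mul_gaussD1 hs
  have ih2 : ∀ k, Integrable fun x => Real.exp (k * x) * h2 x := integrable_exp_mul_gaussD2 hs
  have e01 : ∀ p q, ∫ x, payoffKernel D z ρ g0 h1 p q x ∂(volume.prod volume) =
      Real.exp (q - z + 1 / 2 * Szz α σ γ T₁ T₂) / D := by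
    intro p q
    rw [integral_payoffKernel ig0 ih1, integral_exp_mul_gauss hr, integral_exp_mul_gaussD1 hs,
      integral_exp_mul_gaussD1 hs, ← hvar, Real.exp_add, Real.exp_add]
    ring
  have e02 : ∀ p q, ∫ x, payoffKernel D z ρ g0 h2 p q x ∂(volume.prod volume) =
      Real.exp (q - z + 1 / 2 * Szz α σ γ T₁ T₂) / D := by
    intro p q
    rw [integral_payoffKernel ig0 ih2, integral_exp_mul_gauss hr, integral_exp_mul_gaussD2 hs,
      integral_exp_mul_gaussD2 hs, ← hvar, Real.exp_add, Real.exp_add]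
    ring
  have e11 : ∀ p q, ∫ x, payoffKernel D z ρ g1 h1 p q x ∂(volume.prod volume) =
      ρ * (Real.exp (q - z + 1 / 2 * Szz α σ γ T₁ T₂) / D) := by
    intro p q
    rw [integral_payoffKernel ig1 ih1, integral_exp_mul_gaussD1 hr, integral_exp_mul_gaussD1 hs,
      integral_exp_mul_gaussD1 hs, ← hvar, Real.exp_add, Real.exp_add]
    ring
  set p0 := phiR α T₁ T₂ * y with hp0
  set q0 := z + muStar α σ γ y T₁ T₂ with hq0
  set pp : ℝ → ℝ := fun t => phiR α T₁ T₂ * (y + dY α σ γ T₁ t) with hpp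
  set pm : ℝ → ℝ := fun t => phiR α T₁ T₂ * (y - dY α σ γ T₁ t) with hpm
  set qp : ℝ → ℝ := fun t =>
    z + dZ α σ γ T₁ t + muStar α σ γ (y + dY α σ γ T₁ t) T₁ T₂ with hqp
  set qm : ℝ → ℝ := fun t =>
    z - dZ α σ γ T₁ t + muStar α σ γ (y - dY α σ γ T₁ t) T₁ T₂ with hqm
  have cdY := continuous_dY hα hσc hγc T₁
  have cdZ := continuous_dZ hα hσc hγc T₁
  have cpp : Continuous pp := by fun_prop
  have cpm : Continuous pm := by fun_prop
  have cqp : Continuous qp := by unfold qp muStar; fun_prop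
  have cqm : Continuous qm := by unfold qm muStar; fun_prop
  set μ : Measure ℝ := volume.restrict (Set.Ioc T₁ T₂) with hμ
  have integrable_of_continuousOn : ∀ {w : ℝ → ℝ}, ContinuousOn w (Set.Icc T₁ T₂) →
      Integrable w μ := fun hw =>
    (hw.integrableOn_Icc (μ := volume)).mono_set Set.Ioc_subset_Icc_self
  have cRp := continuousOn_Rplus hα hσc hγc hys y T₁ hγ
  have cRm := continuousOn_Rminus hα hσc hγc hys y T₁ hγ
  have iP := integrable_family_payoffKernel (D := D) (z := z) (ρ := ρ) ig0 ih1
    cpp.measurable cqp.measurable (integrable_of_continuousOn cRp)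
    (integrable_of_continuousOn (cRp.mul (Real.continuous_exp.comp cqp).continuousOn))
  have iM := integrable_family_payoffKernel (D := D) (z := z) (ρ := ρ) ig0 ih1
    cpm.measurable cqm.measurable (integrable_of_continuousOn cRm)
    (integrable_of_continuousOn (cRm.mul (Real.continuous_exp.comp cqm).continuousOn))
  have i01 := integrable_payoffKernel (D := D) (z := z) (ρ := ρ) ig0 ih1 p0 q0
  have i02 := integrable_payoffKernel (D := D) (z := z) (ρ := ρ) ig0 ih2 p0 q0
  have i11 := integrable_payoffKernel (D := D) (z := z) (ρ := ρ) ig1 ih1 p0 q0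
  have iR := (integrable_of_continuousOn hR1.continuousOn).mul_prod i01
  set F : ℝ → ℝ × ℝ → ℝ := fun t x =>
    Rplus α σ γ ystar y T₁ t * payoffKernel D z ρ g0 h1 (pp t) (qp t) x
      - Rminus α σ γ ystar y T₁ t * payoffKernel D z ρ g0 h1 (pm t) (qm t) x
      + R1star t * payoffKernel D z ρ g0 h1 p0 q0 x with hF
  have iF : Integrable (Function.uncurry F) (μ.prod (volume.prod volume)) := (iP.sub iM).add iR
  set H : ℝ × ℝ → ℝ := fun x => (∫ t, F t x ∂μ)
      - muStar α σ γ y T₁ T₂ * payoffKernel D z ρ g0 h1 p0 q0 x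
      - Srz α σ γ T₁ T₂ * (payoffKernel D z ρ g1 h1 p0 q0 x
        - ρ * payoffKernel D z ρ g0 h2 p0 q0 x)
      - Szz α σ γ T₁ T₂ * payoffKernel D z ρ g0 h2 p0 q0 x with hH
  have hpoint : ∀ η ζ, (Real.exp (ζ - z) / D - 1) * G1 α σ γ ystar R1star y z T₁ η ζ T₂ =
      H (η, ζ) := by
    intro η ζ
    simp only [hH, hF, G1, dzG0_eq hs hG, dzzG0_eq hs hG, dydzG0_eq hs hr hG,
      intervalIntegral.integral_of_le h12.le, payoffKernel]
    simp only [mul_sub (Real.exp (ζ - z) / D - 1), ← integral_const_mul]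
    congr 1
    · congr 1
      · congr 1
        · refine integral_congr_ae (Filter.Eventually.of_forall fun t => ?_)
          simp only [hpp, hpm, hqp, hqm, hp0, hq0, hg0, hh1]
          ring
        · simp only [hp0, hq0, hg0, hh1]
          ring
      · simp only [hp0, hq0, hg0, hh1, hg1, hh2]
        field_simp
        ring
    · simp only [hp0, hq0, hg0, hh2]
      ring
  have iF' : Integrable (fun x => ∫ t, F t x ∂μ) (volume.prod volume) := iF.integral_prod_right
  have j1 := i01.const_mul (muStar α σ γ y T₁ T₂)
  have j2 := (i11.sub (i02.const_mul ρ)).const_mul (Srz α σ γ T₁ T₂)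
  have j3 := i02.const_mul (Szz α σ γ T₁ T₂)
  have iH : Integrable H (volume.prod volume) := ((iF'.sub j1).sub j2).sub j3
  simp_rw [hpoint]
  rw [← integral_prod H iH]
  have hHint : ∫ x, H x ∂(volume.prod volume) =
      (∫ t, ∫ x, F t x ∂(volume.prod volume) ∂μ)
      - muStar α σ γ y T₁ T₂ * (Real.exp (q0 - z + 1 / 2 * Szz α σ γ T₁ T₂) / D)
      - Szz α σ γ T₁ T₂ * (Real.exp (q0 - z + 1 / 2 * Szz α σ γ T₁ T₂) / D) := by
    rw [integral_integral_swap iF]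
    have : ∫ x, H x ∂(volume.prod volume) = _ := integral_sub ((iF'.sub j1).sub j2) j3
    rw [this]
    have : ∫ x, (payoffKernel D z ρ g1 h1 p0 q0 x - ρ * payoffKernel D z ρ g0 h2 p0 q0 x)
        ∂(volume.prod volume) = 0 := by
      rw [integral_sub i11 (i02.const_mul ρ), integral_const_mul, e11, e02, sub_self]
    erw [integral_sub (iF'.sub j1) j2, integral_sub iF' j1, integral_const_mul,
      integral_const_mul, integral_const_mul, this, e01, e02]
    ring
  have hFt : ∀ t, ∫ x, F t x ∂(volume.prod volume) =
      (Rplus α σ γ ystar y T₁ t *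
          Real.exp (Bstar α σ γ T₁ T₂ * dY α σ γ T₁ t + dZ α σ γ T₁ t)
        - Rminus α σ γ ystar y T₁ t *
            Real.exp (-(Bstar α σ γ T₁ T₂ * dY α σ γ T₁ t) - dZ α σ γ T₁ t)
        + R1star t) * (Real.exp (muStar α σ γ y T₁ T₂ + 1 / 2 * Szz α σ γ T₁ T₂) / D) := by
    intro t
    have a1 := (integrable_payoffKernel (D := D) (z := z) (ρ := ρ) ig0 ih1 (pp t)
      (qp t)).const_mul (Rplus α σ γ ystar y T₁ t)
    have a2 := (integrable_payoffKernel (D := D) (z := z) (ρ := ρ) ig0 ih1 (pm t)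
      (qm t)).const_mul (Rminus α σ γ ystar y T₁ t)
    have b1 : qp t - z + 1 / 2 * Szz α σ γ T₁ T₂ =
        Bstar α σ γ T₁ T₂ * dY α σ γ T₁ t + dZ α σ γ T₁ t +
          (muStar α σ γ y T₁ T₂ + 1 / 2 * Szz α σ γ T₁ T₂) := by
      simp only [hqp, muStar_add]
      ring
    have b2 : qm t - z + 1 / 2 * Szz α σ γ T₁ T₂ =
        -(Bstar α σ γ T₁ T₂ * dY α σ γ T₁ t) - dZ α σ γ T₁ t +
          (muStar α σ γ y T₁ T₂ + 1 / 2 * Szz α σ γ T₁ T₂) := by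
      simp only [hqm, sub_eq_add_neg y, muStar_add]
      ring
    have b3 : q0 - z + 1 / 2 * Szz α σ γ T₁ T₂ =
        muStar α σ γ y T₁ T₂ + 1 / 2 * Szz α σ γ T₁ T₂ := by
      rw [hq0]
      ring
    refine (integral_add (a1.sub a2) (i01.const_mul (R1star t))).trans ?_
    rw [integral_sub' a1 a2, integral_const_mul, integral_const_mul, integral_const_mul,
      e01, e01, e01, b1, b2, b3, Real.exp_add (_ + _) (_ + _), Real.exp_add (-_ - _) (_ + _)]
    ring
  rw [hHint]
  simp_rw [hFt]
  rw [integral_mul_const, intervalIntegral.integral_of_le h12.le, hq0, add_sub_cancel_left]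
  ring
end

section
/- In the Hull–White case γ ≡ 0 (so ψ_r ≡ 1), for all t ≤ v the variance of the compounding variable admits the closed form S_zz(t,v) = ∫_t^v σ(s)² · B(s,v)² ds, where B(s,v) := ∫_s^v φ_r(s,u) du. Equivalently, 2 ∫_t^v ( ∫_t^u φ_r(w,u) ( ∫_t^w φ_r(s,w)² σ(s)² ds ) dw ) du = ∫_t^v σ(s)² ( ∫_s^v φ_r(s,u) du )² ds. -/
open MeasureTheory Real

/-- The mean reversion factor splits as a quotient of values based at the origin. -/
lemma phiR_eq_div {α : ℝ → ℝ} (hα : Continuous α) (s u : ℝ) :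
    phiR α s u = phiR α 0 u / phiR α 0 s := by
  have h := intervalIntegral.integral_add_adjacent_intervals
    (hα.intervalIntegrable (μ := volume) 0 s) (hα.intervalIntegrable s u)
  rw [phiR, phiR, phiR, ← Real.exp_sub, ← h]
  congr 1
  ring

lemma continuous_phiR_zero {α : ℝ → ℝ} (hα : Continuous α) : Continuous (phiR α 0) :=
  Real.continuous_exp.comp
    (intervalIntegral.continuous_primitive (fun a b => hα.intervalIntegrable a b) 0).neg

/-- Integration by parts against a function vanishing at the right endpoint. -/
lemma integral_mul_eq_integral_primitive_mul {f Q q : ℝ → ℝ} (hf : Continuous f)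
    (hq : Continuous q) (hQ : ∀ s, HasDerivAt Q (-q s) s) {t v : ℝ} (hv : Q v = 0) :
    ∫ s in t..v, f s * Q s = ∫ s in t..v, (∫ w in t..s, f w) * q s := by
  have h := intervalIntegral.integral_deriv_mul_eq_sub
    (a := t) (b := v) (u := fun s => ∫ w in t..s, f w) (u' := f) (v := Q) (v' := fun s => -q s)
    (fun s _ => (hf.integral_hasStrictDerivAt t s).hasDerivAt) (fun s _ => hQ s)
    (hf.intervalIntegrable t v) (hq.neg.intervalIntegrable t v)
  have hc : Continuous fun s => ∫ w in t..s, f w :=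
    intervalIntegral.continuous_primitive (fun a b => hf.intervalIntegrable a b) t
  have hQc : Continuous Q := continuous_iff_continuousAt.2 fun s => (hQ s).continuousAt
  rw [intervalIntegral.integral_add (Continuous.intervalIntegrable (by fun_prop) t v)
    (Continuous.intervalIntegrable (by fun_prop) t v)] at h
  simp only [hv, mul_neg, intervalIntegral.integral_neg, intervalIntegral.integral_same,
    mul_zero, zero_mul] at h
  linarith

/-- A weighted square of a tail integral is twice an iterated integral. -/
lemma integral_mul_sq_tail {e g : ℝ → ℝ} (he : Continuous e) (hg : Continuous g) (t v : ℝ) :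
    ∫ s in t..v, g s * (∫ u in s..v, e u) ^ 2
      = 2 * ∫ u in t..v, e u * ∫ w in t..u, e w * ∫ s in t..w, g s := by
  have hQ : ∀ s, HasDerivAt (fun s => ∫ u in s..v, e u) (-e s) s := fun s =>
    intervalIntegral.integral_hasDerivAt_left (he.intervalIntegrable s v)
      (he.stronglyMeasurableAtFilter _ _) he.continuousAt
  have hQc : Continuous fun s => ∫ u in s..v, e u :=
    continuous_iff_continuousAt.2 fun s => (hQ s).continuousAt
  have hG : Continuous fun w => ∫ s in t..w, g s :=
    intervalIntegral.continuous_primitive (fun a b => hg.intervalIntegrable a b) t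
  rw [integral_mul_eq_integral_primitive_mul (Q := fun s => (∫ u in s..v, e u) ^ 2)
    (q := fun s => 2 * (e s * ∫ u in s..v, e u)) hg
    (continuous_const.mul (he.mul hQc)) (fun s => ((hQ s).pow 2).congr_deriv (by ring)) (by simp)]
  calc ∫ s in t..v, (∫ w in t..s, g w) * (2 * (e s * ∫ u in s..v, e u))
      = 2 * ∫ s in t..v, (e s * ∫ w in t..s, g w) * ∫ u in s..v, e u := by
        rw [← intervalIntegral.integral_const_mul]
        congr 1 with s
        ring
    _ = _ := by
        rw [integral_mul_eq_integral_primitive_mul (f := fun s => e s * ∫ w in t..s, g w)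
          (he.mul hG) he hQ (by simp)]
        simp only [mul_comm]

theorem Szz_closed_form_HW (α σ : ℝ → ℝ)
    (hα : Continuous α) (hσc : Continuous σ)
    (t v : ℝ) (htv : t ≤ v) :
    Szz α σ (fun _ => 0) t v
      = ∫ s in t..v, (σ s) ^ 2 * (∫ u in s..v, phiR α s u) ^ 2 := by
  have he := continuous_phiR_zero hα
  have hne : ∀ s, phiR α 0 s ≠ 0 := fun s => Real.exp_ne_zero _
  have hrr : ∀ w, Srr α σ t w
      = phiR α 0 w ^ 2 * ∫ s in t..w, σ s ^ 2 / phiR α 0 s ^ 2 := fun w => by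
    rw [Srr, ← intervalIntegral.integral_const_mul]
    congr 1 with s
    rw [phiR_eq_div hα s w]
    ring
  have hrz : ∀ u, Srz α σ (fun _ => 0) t u = phiR α 0 u *
      ∫ w in t..u, phiR α 0 w * ∫ s in t..w, σ s ^ 2 / phiR α 0 s ^ 2 := fun u => by
    rw [Srz, ← intervalIntegral.integral_const_mul]
    congr 1 with w
    have := hne w
    rw [hrr, phiR_eq_div hα w u, psiR]
    field_simp
    simp
  have hg : Continuous fun s => σ s ^ 2 / phiR α 0 s ^ 2 :=
    (hσc.pow 2).div (he.pow 2) fun s => pow_ne_zero 2 (hne s)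
  have hzz : Szz α σ (fun _ => 0) t v = 2 * ∫ u in t..v, phiR α 0 u *
      ∫ w in t..u, phiR α 0 w * ∫ s in t..w, σ s ^ 2 / phiR α 0 s ^ 2 := by
    simp [Szz, psiR, hrz]
  rw [hzz, ← integral_mul_sq_tail he hg]
  congr 1 with s
  simp only [phiR_eq_div hα s, intervalIntegral.integral_div]
  ring
end
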